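/- Let 1 ≤ k ≤ n be integers and let F_k = { [i, i'] ⊆ [n] : i' − i + 1 ≥ k } be the family of all intervals in [n] of length at least k. Then ⌊n/k⌋ ≤ HHdim(F_k) ≤ 2n/k. -/

import Mathlib

/-!
Upper bound: assign to each heavy hitter an order-connected set isolating it in the support of `v`.
If `a < b ≤ x` are such that `a` and `b` are heavy hitters and the set of `a` contains `x`, then it
also contains `b`, which is impossible; symmetrically on the other side of `x`. So every point lies
in at most two of the chosen sets, one for each side, and double counting finishes.

Lower bound: pairwise disjoint members of the set system are all hit exactly once by the indicator
of a set of representatives, and `[n]` contains `⌊n/k⌋` disjoint blocks of length `k`.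
-/

/-- The support of a vector `v`: the set of its non-zero coordinates. -/
def vecSupp {α : Type*} (v : α → ℝ) : Set α := {i | v i ≠ 0}

/-- The set of heavy hitters of `v` induced by the set system `S`:
indices `i` such that some member `s ∈ S` satisfies `supp(v) ∩ s = {i}`. -/
def HHset {α : Type*} (S : Set (Set α)) (v : α → ℝ) : Set α :=
  {i | ∃ s ∈ S, vecSupp v ∩ s = {i}}

/-- The heavy-hitter dimension of a set system: the supremum over vectors `v`
of the number of heavy hitters induced by `S`. -/
noncomputable def HHdim {α : Type*} (S : Set (Set α)) : ℕ :=
  sSup {k | ∃ v : α → ℝ, (HHset S v).ncard = k}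

section General

variable {α : Type*}

lemma vecSupp_indicator_one (A : Set α) : vecSupp (A.indicator 1) = A := by
  ext a
  simp [vecSupp]

lemma HHset_subset_vecSupp (S : Set (Set α)) (v : α → ℝ) : HHset S v ⊆ vecSupp v := by
  rintro a ⟨s, -, hs⟩
  exact (hs.ge rfl).1

lemma HHset_subset_sUnion (S : Set (Set α)) (v : α → ℝ) : HHset S v ⊆ ⋃₀ S := by
  rintro a ⟨s, hsS, hs⟩
  exact ⟨s, hsS, (hs.ge rfl).2⟩

variable {S : Set (Set α)}

lemma bddAbove_ncard_HHset (hS : (⋃₀ S).Finite) :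
    BddAbove {m | ∃ v : α → ℝ, (HHset S v).ncard = m} := by
  refine ⟨(⋃₀ S).ncard, ?_⟩
  rintro _ ⟨v, rfl⟩
  exact Set.ncard_le_ncard (HHset_subset_sUnion S v) hS

lemma ncard_HHset_le_HHdim (hS : (⋃₀ S).Finite) (v : α → ℝ) : (HHset S v).ncard ≤ HHdim S :=
  le_csSup (bddAbove_ncard_HHset hS) ⟨v, rfl⟩

lemma exists_ncard_HHset_eq_HHdim (hS : (⋃₀ S).Finite) :
    ∃ v : α → ℝ, (HHset S v).ncard = HHdim S :=
  Nat.sSup_mem (Set.range_nonempty fun v : α → ℝ => (HHset S v).ncard)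
    (bddAbove_ncard_HHset hS)

theorem card_le_HHdim_of_pairwiseDisjoint {ι : Type*} {t : Finset ι} {B : ι → Set α}
    (hS : (⋃₀ S).Finite) (hBS : ∀ i ∈ t, B i ∈ S) (hne : ∀ i ∈ t, (B i).Nonempty)
    (hdisj : (t : Set ι).PairwiseDisjoint B) : t.card ≤ HHdim S := by
  rcases t.eq_empty_or_nonempty with rfl | ⟨i₀, hi₀⟩
  · exact Nat.zero_le _
  have : Nonempty α := (hne i₀ hi₀).nonempty
  choose! r hr using hne
  have eq_of_rep_mem : ∀ i ∈ t, ∀ j ∈ t, r j ∈ B i → j = i := fun i hi j hj h =>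
    hdisj.elim_set hj hi (r j) (hr j hj) h
  have hinj : Set.InjOn r t := fun i hi j hj hij =>
    eq_of_rep_mem j hj i hi (hij ▸ hr j hj)
  have hhit : r '' t ⊆ HHset S ((r '' t).indicator 1) := by
    rintro _ ⟨i, hi, rfl⟩
    refine ⟨B i, hBS i hi, ?_⟩
    rw [vecSupp_indicator_one]
    refine Set.Subset.antisymm ?_ (Set.singleton_subset_iff.2 ⟨⟨i, hi, rfl⟩, hr i hi⟩)
    rintro _ ⟨⟨j, hj, rfl⟩, hji⟩
    exact congrArg r (eq_of_rep_mem i hi j hj hji)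
  calc t.card = (r '' t).ncard := by rw [hinj.ncard_image, Set.ncard_coe_finset]
    _ ≤ (HHset S ((r '' t).indicator 1)).ncard :=
      Set.ncard_le_ncard hhit (hS.subset (HHset_subset_sUnion _ _))
    _ ≤ HHdim S := ncard_HHset_le_HHdim hS _

end General

section LinearOrder

variable {α : Type*} [LinearOrder α]

open Classical in
lemma card_filter_mem_le_two_of_ordConnected {H : Finset α} {I : α → Set α}
    (hord : ∀ a ∈ H, (I a).OrdConnected) (hI : ∀ a ∈ H, ↑H ∩ I a = {a}) (x : α) :
    (H.filter (x ∈ I ·)).card ≤ 2 := by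
  set F := H.filter (x ∈ I ·)
  have eq_of_between : ∀ a ∈ F, ∀ b ∈ F, b ∈ Set.uIcc a x → b = a := by
    intro a ha b hb hab
    obtain ⟨haH, hxa⟩ := Finset.mem_filter.1 ha
    have haa : a ∈ I a := ((hI a haH).ge rfl).2
    exact (hI a haH).le ⟨(Finset.mem_filter.1 hb).1, (hord a haH).uIcc_subset haa hxa hab⟩
  have hleft : (F.filter (· ≤ x)).card ≤ 1 := by
    refine Finset.card_le_one.2 fun a ha b hb => ?_
    obtain ⟨haF, hax⟩ := Finset.mem_filter.1 ha
    obtain ⟨hbF, hbx⟩ := Finset.mem_filter.1 hb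
    rcases le_total a b with hab | hba
    · exact (eq_of_between a haF b hbF (Set.mem_uIcc_of_le hab hbx)).symm
    · exact eq_of_between b hbF a haF (Set.mem_uIcc_of_le hba hax)
  have hright : (F.filter (¬ · ≤ x)).card ≤ 1 := by
    refine Finset.card_le_one.2 fun a ha b hb => ?_
    obtain ⟨haF, hxa⟩ := Finset.mem_filter.1 ha
    obtain ⟨hbF, hxb⟩ := Finset.mem_filter.1 hb
    rcases le_total a b with hab | hba
    · exact eq_of_between b hbF a haF (Set.mem_uIcc_of_ge (not_le.1 hxa).le hab)
    · exact (eq_of_between a haF b hbF (Set.mem_uIcc_of_ge (not_le.1 hxb).le hba)).symm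
  calc F.card = (F.filter (· ≤ x)).card + (F.filter (¬ · ≤ x)).card :=
      (Finset.card_filter_add_card_filter_not _).symm
    _ ≤ 2 := add_le_add hleft hright

theorem HHdim_mul_le_of_ordConnected {S : Set (Set α)} {k : ℕ} (hS : (⋃₀ S).Finite)
    (hord : ∀ s ∈ S, s.OrdConnected) (hcard : ∀ s ∈ S, k ≤ s.ncard) :
    HHdim S * k ≤ (⋃₀ S).ncard * 2 := by
  classical
  obtain ⟨v, hv⟩ := exists_ncard_HHset_eq_HHdim hS
  have hfin : (HHset S v).Finite := hS.subset (HHset_subset_sUnion S v)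
  have hisol : ∀ a ∈ hfin.toFinset, ∃ s ∈ S, vecSupp v ∩ s = {a} := fun a ha =>
    hfin.mem_toFinset.1 ha
  choose! I hIS hI using hisol
  have hHI : ∀ a ∈ hfin.toFinset, ↑hfin.toFinset ∩ I a = {a} := by
    intro a ha
    refine Set.Subset.antisymm ?_ (Set.singleton_subset_iff.2 ⟨ha, ((hI a ha).ge rfl).2⟩)
    rw [hfin.coe_toFinset, ← hI a ha]
    exact Set.inter_subset_inter_left _ (HHset_subset_vecSupp S v)
  rw [← hv, Set.ncard_eq_toFinset_card _ hfin, Set.ncard_eq_toFinset_card _ hS]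
  refine Finset.card_mul_le_card_mul (fun a x => x ∈ I a) (fun a ha => ?_) fun x _ =>
    card_filter_mem_le_two_of_ordConnected (fun a ha => hord _ (hIS a ha)) hHI x
  have hIa : I a ⊆ (hS.toFinset.filter (· ∈ I a) : Finset α) := fun x hx =>
    Finset.mem_filter.2 ⟨hS.mem_toFinset.2 ⟨_, hIS a ha, hx⟩, hx⟩
  calc k ≤ (I a).ncard := hcard _ (hIS a ha)
    _ ≤ (hS.toFinset.filter (· ∈ I a)).card := by
      simpa only [Set.ncard_coe_finset] using Set.ncard_le_ncard hIa

end LinearOrder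

/-- The intervals `[i, i'] ⊆ [n]` of length at least `k`, where `[n] = {1, ..., n}`. The length
condition `i' - i + 1 ≥ k` is written without subtraction, which truncates in `ℕ`. -/
def longIntervals (n k : ℕ) : Set (Set ℕ) :=
  {s : Set ℕ | ∃ i i' : ℕ, 1 ≤ i ∧ i' ≤ n ∧ i + k ≤ i' + 1 ∧ s = Set.Icc i i'}

section LongIntervals

variable {n k : ℕ}

lemma sUnion_longIntervals_subset (n k : ℕ) : ⋃₀ longIntervals n k ⊆ Set.Icc 1 n := by
  rintro x ⟨_, ⟨i, i', hi, hi', -, rfl⟩, hx⟩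
  exact Set.Icc_subset_Icc hi hi' hx

lemma finite_sUnion_longIntervals (n k : ℕ) : (⋃₀ longIntervals n k).Finite :=
  (Set.finite_Icc 1 n).subset (sUnion_longIntervals_subset n k)

lemma ordConnected_of_mem_longIntervals {s : Set ℕ} (hs : s ∈ longIntervals n k) :
    s.OrdConnected := by
  obtain ⟨i, i', -, -, -, rfl⟩ := hs
  exact Set.ordConnected_Icc

lemma le_ncard_of_mem_longIntervals {s : Set ℕ} (hs : s ∈ longIntervals n k) : k ≤ s.ncard := by
  obtain ⟨i, i', -, -, hlen, rfl⟩ := hs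
  rw [← Finset.coe_Icc, Set.ncard_coe_finset, Nat.card_Icc]
  omega

lemma Ioc_mem_longIntervals {a b : ℕ} (hb : b ≤ n) (hlen : a + k ≤ b) :
    Set.Ioc a b ∈ longIntervals n k :=
  ⟨a + 1, b, by omega, hb, by omega, (Set.Icc_add_one_left_eq_Ioc a b).symm⟩

theorem div_le_HHdim_longIntervals (n : ℕ) (hk : 1 ≤ k) : n / k ≤ HHdim (longIntervals n k) := by
  let block (j : ℕ) : Set ℕ := Set.Ioc (k * j) (k * (j + 1))
  have hmem : ∀ j ∈ Finset.range (n / k), block j ∈ longIntervals n k := by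
    intro j hj
    have hend : k * (j + 1) ≤ n :=
      (Nat.mul_le_mul_left k (Finset.mem_range.1 hj)).trans (Nat.mul_div_le n k)
    exact Ioc_mem_longIntervals hend (Nat.mul_succ k j).ge
  have hne : ∀ j ∈ Finset.range (n / k), (block j).Nonempty := fun j _ =>
    Set.nonempty_Ioc.2 (Nat.mul_lt_mul_of_pos_left j.lt_succ_self hk)
  have hdisj : Pairwise (Function.onFun Disjoint block) :=
    Monotone.pairwise_disjoint_on_Ioc_succ fun _ _ h => Nat.mul_le_mul_left k h
  simpa only [Finset.card_range] using
    card_le_HHdim_of_pairwiseDisjoint (finite_sUnion_longIntervals n k) hmem hne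
      (hdisj.set_pairwise _)

theorem HHdim_longIntervals_mul_le (n k : ℕ) : HHdim (longIntervals n k) * k ≤ 2 * n := by
  have hground : (⋃₀ longIntervals n k).ncard ≤ n := by
    simpa using Set.ncard_le_ncard (sUnion_longIntervals_subset n k)
  calc HHdim (longIntervals n k) * k ≤ (⋃₀ longIntervals n k).ncard * 2 :=
      HHdim_mul_le_of_ordConnected (finite_sUnion_longIntervals n k)
        (fun _ => ordConnected_of_mem_longIntervals) fun _ => le_ncard_of_mem_longIntervals
    _ ≤ 2 * n := by omega

end LongIntervals

/-- For `1 ≤ k ≤ n`, the family of all intervals `[i, i'] ⊆ [n]` of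
length `i' - i + 1 ≥ k` has heavy-hitter dimension between `⌊n/k⌋` and `2n/k`. -/
theorem HHdim_long_intervals (n k : ℕ) (hk : 1 ≤ k) (hkn : k ≤ n) :
    n / k ≤ HHdim {s : Set ℕ | ∃ i i' : ℕ, 1 ≤ i ∧ i' ≤ n ∧ i + k ≤ i' + 1 ∧
        s = Set.Icc i i'} ∧
      (HHdim {s : Set ℕ | ∃ i i' : ℕ, 1 ≤ i ∧ i' ≤ n ∧ i + k ≤ i' + 1 ∧
        s = Set.Icc i i'} : ℝ) ≤ 2 * n / k := by
  have hk' : (0 : ℝ) < k := by exact_mod_cast hk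
  refine ⟨div_le_HHdim_longIntervals n hk, (le_div_iff₀ hk').2 ?_⟩
  exact_mod_cast HHdim_longIntervals_mul_le n k
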